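/- arXiv:1709.01172 — 3 statements merged into one kernel-verified Lean document; each statement's English description precedes it below -/
import Mathlib

section
/- There exist constants c > 1 and C > 0 such that the set of primes p possessing no prime primitive root q ≤ C · (log p)^c has relative density zero in the primes; that is, (#{p ≤ x : p prime and no prime q ≤ C (log p)^c is a primitive root modulo p}) / π(x) → 0 as x → ∞, where π(x) is the number of primes up to x. -/
lemma aux_moebius_sum (m : ℕ) (hm : m ≠ 0) :
    ∑ d ∈ m.divisors, (ArithmeticFunction.moebius d : ℂ) = if m = 1 then 1 else 0 := by
  have h := congrArg (fun f => f m) ArithmeticFunction.moebius_mul_coe_zeta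
  simp only [ArithmeticFunction.coe_mul_zeta_apply, ArithmeticFunction.one_apply] at h
  have h2 := congrArg (fun z : ℤ => (z : ℂ)) h
  push_cast at h2
  exact h2

lemma aux_moebius_ind (n e : ℕ) (hn : n ≠ 0) (he : e ∣ n) :
    ∑ d ∈ n.divisors, (if e ∣ n / d then (ArithmeticFunction.moebius d : ℂ) else 0)
      = if e = n then 1 else 0 := by
  obtain ⟨m, rfl⟩ := he
  have hm : m ≠ 0 := by rintro rfl; simp at hn
  have he : e ≠ 0 := by rintro rfl; simp at hn
  rw [← Finset.sum_filter]
  have : (e * m).divisors.filter (fun d => e ∣ e * m / d) = m.divisors := by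
    ext d
    simp only [Finset.mem_filter, Nat.mem_divisors]
    constructor
    · rintro ⟨⟨hd, h0⟩, h⟩
      refine ⟨?_, hm⟩
      obtain ⟨t, ht⟩ := h
      have : e * m = e * (t * d) := by
        rw [← Nat.div_mul_cancel hd, ht, mul_assoc]
      exact ⟨t, by rw [Nat.eq_of_mul_eq_mul_left (Nat.pos_of_ne_zero he) this, mul_comm]⟩
    · rintro ⟨hd, h0⟩
      refine ⟨⟨hd.mul_left _, hn⟩, ?_⟩
      rw [Nat.mul_div_assoc _ hd]
      exact dvd_mul_right _ _
  rw [this, aux_moebius_sum m hm]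
  congr 1
  simp only [eq_iff_iff]
  constructor
  · rintro rfl; simp
  · intro h
    have : e * 1 = e * m := by simpa using h
    exact (Nat.eq_of_mul_eq_mul_left (Nat.pos_of_ne_zero he) this).symm

lemma aux_totient (n : ℕ) (hn : 0 < n) :
    ∑ d ∈ n.divisors, (ArithmeticFunction.moebius d : ℂ) * (1 / d) = (Nat.totient n : ℂ) / n := by
  have h := (ArithmeticFunction.sum_eq_iff_sum_mul_moebius_eq (R := ℂ) (f := fun n => (Nat.totient n : ℂ))
    (g := fun n => (n : ℂ))).1 (by
      intro n _
      rw [← Nat.cast_sum, Nat.sum_totient]) n hn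
  rw [← h, Nat.sum_divisorsAntidiagonal (fun a b => (ArithmeticFunction.moebius a : ℂ) * (b : ℂ)),
    Finset.sum_div]
  refine Finset.sum_congr rfl fun d hd => ?_
  have hd' := Nat.dvd_of_mem_divisors hd
  have hd0 : (d : ℂ) ≠ 0 := by
    have := Nat.pos_of_mem_divisors hd
    exact_mod_cast this.ne'
  have hn0 : (n : ℂ) ≠ 0 := by exact_mod_cast hn.ne'
  rw [Nat.cast_div hd' hd0]
  field_simp

lemma aux_le_tau_totient (n : ℕ) (hn : 0 < n) : n ≤ n.divisors.card * n.totient := by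
  conv_lhs => rw [← Nat.sum_totient n]
  rw [← smul_eq_mul]
  apply Finset.sum_le_card_nsmul
  intro d hd
  exact Nat.le_of_dvd (Nat.totient_pos.2 hn) (Nat.totient_dvd_of_dvd (Nat.dvd_of_mem_divisors hd))

lemma aux_exists_char (p : ℕ) [Fact p.Prime] :
    ∃ ψ : MulChar (ZMod p) ℂ, (∀ u : (ZMod p)ˣ, ψ u = 1 → u = 1) ∧
      ∀ m, ψ ^ m = 1 → p - 1 ∣ m := by
  have hp := (Fact.out : p.Prime)
  have hn : p - 1 ≠ 0 := by have := hp.two_le; omega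
  obtain ⟨g, hg⟩ := IsCyclic.exists_generator (α := (ZMod p)ˣ)
  have hζ := Complex.isPrimitiveRoot_exp (p - 1) hn
  have hcard : Fintype.card (ZMod p)ˣ = p - 1 := ZMod.card_units p
  have hog : orderOf g = p - 1 := by
    rw [orderOf_eq_card_of_forall_mem_zpowers hg, Nat.card_eq_fintype_card, hcard]
  obtain ⟨ζ, hz⟩ := hζ.isUnit hn
  have hζ' : IsPrimitiveRoot ζ (p - 1) := by
    rw [← hz] at hζ
    exact IsPrimitiveRoot.coe_units_iff.1 hζ
  have hmem : ζ ∈ rootsOfUnity (Fintype.card (ZMod p)ˣ) ℂ := by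
    rw [hcard, mem_rootsOfUnity]; exact hζ'.pow_eq_one
  have hspec := MulChar.ofRootOfUnity_spec hmem hg
  set ψ := MulChar.ofRootOfUnity hmem hg
  refine ⟨ψ, ?_, ?_⟩
  · intro u hu
    have hfin : IsOfFinOrder g := isOfFinOrder_of_finite g
    obtain ⟨m, hm⟩ := (hfin.mem_powers_iff_mem_zpowers).2 (hg u)
    simp only at hm
    rw [← hm] at hu ⊢
    rw [Units.val_pow_eq_pow_val, map_pow, hspec] at hu
    rw [← orderOf_dvd_iff_pow_eq_one, hog]
    apply hζ'.dvd_of_pow_eq_one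
    ext; push_cast; exact hu
  · intro m hm
    apply hζ'.dvd_of_pow_eq_one
    ext; push_cast
    rw [← hspec, ← MulChar.pow_apply_coe, hm, MulChar.one_apply_coe]

/-- expansion of indicator -/
lemma aux_expand (p : ℕ) [Fact p.Prime] (ψ : MulChar (ZMod p) ℂ)
    (hψ : ∀ u : (ZMod p)ˣ, ψ u = 1 → u = 1) (u : (ZMod p)ˣ) :
    ∑ d ∈ (p - 1).divisors, (ArithmeticFunction.moebius d : ℂ) * ((1 / d) *
      ∑ j ∈ Finset.range d, (ψ ^ ((p - 1) / d * j)) (u : ZMod p)) =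
      if orderOf u = p - 1 then 1 else 0 := by
  have hp := (Fact.out : p.Prime)
  have hn : p - 1 ≠ 0 := by have := hp.two_le; omega
  have hord : orderOf u ∣ p - 1 := by
    rw [← ZMod.card_units p]; exact orderOf_dvd_card
  rw [← aux_moebius_ind (p - 1) (orderOf u) hn hord]
  refine Finset.sum_congr rfl fun d hd => ?_
  have hd' := Nat.dvd_of_mem_divisors hd
  have hd0 : (d : ℂ) ≠ 0 := by
    have := Nat.pos_of_mem_divisors hd
    exact_mod_cast this.ne'
  have h1 : ∀ j, (ψ ^ ((p - 1) / d * j)) (u : ZMod p) = (ψ u ^ ((p-1) / d)) ^ j := by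
    intro j
    rw [MulChar.pow_apply_coe, pow_mul]
  simp_rw [h1]
  split_ifs with h
  · have : ψ u ^ ((p-1)/d) = 1 := by
      rw [← map_pow, ← Units.val_pow_eq_pow_val, orderOf_dvd_iff_pow_eq_one.1 h]
      simp
    rw [this]
    simp [hd0]
  · have hne : ψ u ^ ((p-1)/d) ≠ 1 := by
      intro hh
      apply h
      rw [orderOf_dvd_iff_pow_eq_one]
      apply hψ
      rw [Units.val_pow_eq_pow_val, map_pow, hh]
    rw [geom_sum_eq hne, ← pow_mul, Nat.div_mul_cancel hd', ← map_pow, ← Units.val_pow_eq_pow_val,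
      orderOf_dvd_iff_pow_eq_one.1 hord]
    simp

lemma aux_bad_char (p : ℕ) [Fact p.Prime] (Q : Finset ℕ) (hQ : Q.Nonempty)
    (hcop : ∀ q ∈ Q, q.Coprime p) (hbad : ∀ q ∈ Q, orderOf (q : ZMod p) ≠ p - 1) :
    ∃ χ : MulChar (ZMod p) ℂ, χ ≠ 1 ∧
      (Q.card : ℝ) ≤ ((p - 1).divisors.card : ℝ) ^ 2 * ‖∑ q ∈ Q, χ (q : ZMod p)‖ := by
  have hp := (Fact.out : p.Prime)
  have hn : p - 1 ≠ 0 := by have := hp.two_le; omega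
  obtain ⟨ψ, hψ, hψ2⟩ := aux_exists_char p
  by_contra! hcon
  set n := p - 1 with hndef
  set t : ℝ := (n.divisors.card : ℝ) with ht
  have htpos : 0 < t := by
    rw [ht]; exact_mod_cast Finset.card_pos.2 (Nat.nonempty_divisors.2 hn)
  set P : ℝ := (Q.card : ℝ) with hP
  have hPpos : 0 < P := by rw [hP]; exact_mod_cast Finset.card_pos.2 hQ
  have hq : ∀ q ∈ Q, ∑ d ∈ n.divisors, (ArithmeticFunction.moebius d : ℂ) * ((1 / d) *
      ∑ j ∈ Finset.range d, (ψ ^ (n / d * j)) (q : ZMod p)) = 0 := by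
    intro q hq
    have h := aux_expand p ψ hψ (ZMod.unitOfCoprime q (hcop q hq))
    rw [if_neg] at h
    · simpa using h
    · rw [← orderOf_units]; simpa using hbad q hq
  have hsum : ∑ d ∈ n.divisors, (ArithmeticFunction.moebius d : ℂ) * ((1 / d) *
      ∑ j ∈ Finset.range d, ∑ q ∈ Q, (ψ ^ (n / d * j)) (q : ZMod p)) = 0 := by
    rw [← Finset.sum_const_zero (s := Q), ← Finset.sum_congr rfl hq, Finset.sum_comm]
    refine Finset.sum_congr rfl fun d hd => ?_
    rw [← Finset.mul_sum, ← Finset.mul_sum, Finset.sum_comm]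
  have hone : ∑ q ∈ Q, (1 : MulChar (ZMod p) ℂ) (q : ZMod p) = P := by
    rw [hP]
    have : ∀ q ∈ Q, (1 : MulChar (ZMod p) ℂ) (q : ZMod p) = 1 := by
      intro q hq
      have := MulChar.one_apply_coe (R' := ℂ) (ZMod.unitOfCoprime q (hcop q hq))
      simpa using this
    rw [Finset.sum_congr rfl this]
    simp
  have hsplit : ∀ d ∈ n.divisors, (ArithmeticFunction.moebius d : ℂ) * ((1 / d) *
      ∑ j ∈ Finset.range d, ∑ q ∈ Q, (ψ ^ (n / d * j)) (q : ZMod p)) =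
      (ArithmeticFunction.moebius d : ℂ) * (1 / d) * P + (ArithmeticFunction.moebius d : ℂ) * ((1 / d) *
      ∑ j ∈ Finset.range (d - 1), ∑ q ∈ Q, (ψ ^ (n / d * (j+1))) (q : ZMod p)) := by
    intro d hd
    obtain ⟨e, rfl⟩ : ∃ e, d = e + 1 := ⟨d - 1, by have := Nat.pos_of_mem_divisors hd; omega⟩
    rw [Finset.sum_range_succ', mul_zero, pow_zero, hone]
    simp only [Nat.add_sub_cancel]
    ring
  rw [Finset.sum_congr rfl hsplit, Finset.sum_add_distrib, ← Finset.sum_mul,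
    aux_totient n (Nat.pos_of_ne_zero hn)] at hsum
  have herr : ‖∑ d ∈ n.divisors, (ArithmeticFunction.moebius d : ℂ) * ((1 / d) *
      ∑ j ∈ Finset.range (d - 1), ∑ q ∈ Q, (ψ ^ (n / d * (j+1))) (q : ZMod p))‖ < P / t := by
    refine (norm_sum_le _ _).trans_lt ?_
    have : P / t = ∑ d ∈ n.divisors, P / t ^ 2 := by
      rw [Finset.sum_const, nsmul_eq_mul, ← ht]; field_simp
    rw [this]
    apply Finset.sum_lt_sum_of_nonempty (Nat.nonempty_divisors.2 hn)
    intro d hd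
    have hdpos := Nat.pos_of_mem_divisors hd
    have hdR : (0:ℝ) < d := by exact_mod_cast hdpos
    have hmu : ‖(ArithmeticFunction.moebius d : ℂ)‖ ≤ 1 := by
      rw [Complex.norm_intCast]
      exact_mod_cast ArithmeticFunction.abs_moebius_le_one
    have hin : ‖∑ j ∈ Finset.range (d - 1), ∑ q ∈ Q, (ψ ^ (n / d * (j+1))) (q : ZMod p)‖ ≤
        (d - 1) * (P / t ^ 2) := by
      refine (norm_sum_le _ _).trans ?_
      have : ((d:ℝ) - 1) * (P / t ^ 2) = ∑ j ∈ Finset.range (d-1), P / t ^ 2 := by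
        rw [Finset.sum_const, nsmul_eq_mul, Finset.card_range, Nat.cast_sub hdpos]; simp
      rw [this]
      refine Finset.sum_le_sum fun j hj => ?_
      have hj' := Finset.mem_range.1 hj
      have hne : ψ ^ (n / d * (j+1)) ≠ 1 := by
        intro h
        have h1 := hψ2 _ h
        have h2 : n / d * d = n := Nat.div_mul_cancel (Nat.dvd_of_mem_divisors hd)
        have h3 : 0 < n / d := Nat.pos_of_ne_zero (by rintro h0; rw [h0] at h2; omega)
        have h4 := Nat.le_of_dvd (by positivity) h1
        have h5 : n / d * (j+1) < n / d * d := by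
          apply Nat.mul_lt_mul_of_pos_left _ h3; omega
        omega
      have := hcon _ hne
      rw [le_div_iff₀ (by positivity)]
      linarith
    rw [norm_mul, norm_mul]
    have h1d : ‖(1 / (d:ℂ))‖ = 1 / d := by simp
    rw [h1d]
    calc _ ≤ 1 * (1 / (d:ℝ) * ((d - 1) * (P / t ^ 2))) := by gcongr
      _ = (1 - 1 / d) * (P / t^2) := by field_simp
      _ < 1 * (P / t^2) := by
          have : 0 < 1 / (d:ℝ) := by positivity
          apply mul_lt_mul_of_pos_right _ (by positivity)
          linarith
      _ = _ := one_mul _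
  have hmain : P / t ≤ ‖((n.totient : ℂ) / n) * P‖ := by
    have h1 : ‖((n.totient : ℂ) / n) * P‖ = (n.totient : ℝ) / n * P := by
      simp [hP]
    rw [h1, div_mul_eq_mul_div, div_le_div_iff₀ htpos (by exact_mod_cast Nat.pos_of_ne_zero hn)]
    have h2 : (n : ℝ) ≤ t * n.totient := by
      rw [ht]; exact_mod_cast aux_le_tau_totient n (Nat.pos_of_ne_zero hn)
    nlinarith
  rw [eq_neg_of_add_eq_zero_left hsum, norm_neg] at hmain
  linarith

lemma aux_fiber (k : ℕ) (Q : Finset ℕ) (hQ : ∀ q ∈ Q, q.Prime) (n : ℕ) :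
    ((Fintype.piFinset (fun _ : Fin k => Q)).filter (fun f => ∏ i, f i = n)).card ≤ k ^ k := by
  rcases ((Fintype.piFinset (fun _ : Fin k => Q)).filter (fun f => ∏ i, f i = n)).eq_empty_or_nonempty
    with h | ⟨f, hf⟩
  · rw [h]; simp
  · rw [Finset.mem_filter, Fintype.mem_piFinset] at hf
    calc _ ≤ (Fintype.piFinset (fun _ : Fin k => Finset.image f Finset.univ)).card := by
          apply Finset.card_le_card
          intro g hg
          rw [Finset.mem_filter, Fintype.mem_piFinset] at hg
          rw [Fintype.mem_piFinset]
          intro i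
          have h1 : g i ∣ ∏ j, f j := by
            rw [hf.2, ← hg.2]; exact Finset.dvd_prod_of_mem _ (Finset.mem_univ i)
          obtain ⟨j, _, hj⟩ := (Nat.Prime.prime (hQ _ (hg.1 i))).exists_mem_finset_dvd h1
          rw [Finset.mem_image]
          exact ⟨j, Finset.mem_univ _, ((Nat.prime_dvd_prime_iff_eq (hQ _ (hg.1 i)) (hQ _ (hf.1 j))).1 hj).symm⟩
      _ = (Finset.image f Finset.univ).card ^ k := by simp
      _ ≤ k ^ k := by
          apply Nat.pow_le_pow_left
          refine Finset.card_image_le.trans ?_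
          simp

lemma aux_periodic (g : ℕ → ℂ) (m : ℕ) (hm : 0 < m) (hper : ∀ n, g (m + n) = g n)
    (hz : ∑ n ∈ Finset.range m, g n = 0) (hb : ∀ n, ‖g n‖ ≤ 1) (M : ℕ) :
    ‖∑ n ∈ Finset.range M, g n‖ ≤ m := by
  induction M using Nat.strong_induction_on with
  | _ M ih =>
    rcases lt_or_ge M m with h | h
    · calc _ ≤ ∑ n ∈ Finset.range M, ‖g n‖ := norm_sum_le _ _
        _ ≤ ∑ n ∈ Finset.range M, (1:ℝ) := Finset.sum_le_sum fun n _ => hb n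
        _ = M := by simp
        _ ≤ m := by exact_mod_cast h.le
    · obtain ⟨M', rfl⟩ := Nat.exists_eq_add_of_le h
      rw [Finset.sum_range_add, hz, zero_add]
      simp_rw [hper]
      exact ih M' (by omega)

lemma aux_full (p p' : ℕ) [Fact p.Prime] [Fact p'.Prime] (hne : p ≠ p')
    (χ : MulChar (ZMod p) ℂ) (χ' : MulChar (ZMod p') ℂ) (hχ : χ ≠ 1) :
    ∑ n ∈ Finset.range (p * p'), χ (n : ZMod p) * (starRingEnd ℂ) (χ' (n : ZMod p')) = 0 := by
  have hp := (Fact.out : p.Prime)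
  have hp' := (Fact.out : p'.Prime)
  have hcop : p.Coprime p' := (Nat.coprime_primes hp hp').2 hne
  have hinj : Set.InjOn (fun n : ℕ => ((n : ZMod p), (n : ZMod p'))) (Finset.range (p * p')) := by
    intro a ha b hb hab
    simp only [Prod.mk.injEq, ZMod.natCast_eq_natCast_iff] at hab
    have := (Nat.modEq_and_modEq_iff_modEq_mul hcop).1 hab
    simp only [Finset.coe_range, Set.mem_Iio] at ha hb
    exact Nat.ModEq.eq_of_lt_of_lt this ha hb
  have hmaps : Set.MapsTo (fun n : ℕ => ((n : ZMod p), (n : ZMod p'))) (Finset.range (p * p'))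
      ((Finset.univ : Finset (ZMod p × ZMod p')) : Set (ZMod p × ZMod p')) := fun _ _ => by simp
  have key : ∑ n ∈ Finset.range (p * p'), χ (n : ZMod p) * (starRingEnd ℂ) (χ' (n : ZMod p')) =
      ∑ z : ZMod p × ZMod p', χ z.1 * (starRingEnd ℂ) (χ' z.2) := by
    apply Finset.sum_nbij (fun n : ℕ => ((n : ZMod p), (n : ZMod p')))
    · intro a _; simp
    · exact hinj
    · apply Finset.surjOn_of_injOn_of_card_le _ hmaps hinj
      simp [ZMod.card]
    · intro a _; rfl
  rw [key, Fintype.sum_prod_type]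
  simp_rw [← Finset.mul_sum]
  rw [← Finset.sum_mul, MulChar.sum_eq_zero_of_ne_one hχ, zero_mul]

lemma aux_corr (p p' : ℕ) [Fact p.Prime] [Fact p'.Prime] (hne : p ≠ p')
    (χ : MulChar (ZMod p) ℂ) (χ' : MulChar (ZMod p') ℂ) (hχ : χ ≠ 1) (M : ℕ) :
    ‖∑ n ∈ Finset.range M, χ (n : ZMod p) * (starRingEnd ℂ) (χ' (n : ZMod p'))‖ ≤ p * p' := by
  have hp := (Fact.out : p.Prime)
  have hp' := (Fact.out : p'.Prime)
  have := aux_periodic (fun n => χ (n : ZMod p) * (starRingEnd ℂ) (χ' (n : ZMod p'))) (p * p')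
    (Nat.mul_pos hp.pos hp'.pos) (by intro n; simp) (aux_full p p' hne χ χ' hχ) (by
      intro n
      rw [norm_mul, RCLike.norm_conj]
      exact mul_le_one₀ (DirichletCharacter.norm_le_one χ _) (norm_nonneg _)
        (DirichletCharacter.norm_le_one χ' _)) M
  exact_mod_cast this

lemma aux_T (B : Finset ℕ) (χ : ∀ p : ℕ, MulChar (ZMod p) ℂ) (x M : ℕ)
    (hB : ∀ p ∈ B, p.Prime ∧ p ≤ x ∧ χ p ≠ 1) (ε : ℕ → ℂ) (hε : ∀ p, ‖ε p‖ = 1) :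
    ∑ n ∈ Finset.range M, ‖∑ p ∈ B, ε p * χ p (n : ZMod p)‖ ^ 2 ≤
      (B.card : ℝ) * (M + B.card * (x:ℝ) ^ 2) := by
  have h1 : ((∑ n ∈ Finset.range M, ‖∑ p ∈ B, ε p * χ p (n : ZMod p)‖ ^ 2 : ℝ) : ℂ) =
      ∑ p ∈ B, ∑ p' ∈ B, (ε p * (starRingEnd ℂ) (ε p')) *
        ∑ n ∈ Finset.range M, χ p (n : ZMod p) * (starRingEnd ℂ) (χ p' (n : ZMod p')) := by
    push_cast
    simp_rw [← Complex.mul_conj', map_sum, map_mul, Finset.sum_mul_sum]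
    rw [Finset.sum_comm]
    refine Finset.sum_congr rfl fun p _ => ?_
    rw [Finset.sum_comm]
    refine Finset.sum_congr rfl fun p' _ => ?_
    rw [Finset.mul_sum]
    refine Finset.sum_congr rfl fun n _ => ?_
    ring
  have hnn : 0 ≤ ∑ n ∈ Finset.range M, ‖∑ p ∈ B, ε p * χ p (n : ZMod p)‖ ^ 2 := by positivity
  rw [← Complex.norm_of_nonneg hnn, h1]
  have h2 : ∀ p ∈ B, ‖∑ p' ∈ B, (ε p * (starRingEnd ℂ) (ε p')) *
        ∑ n ∈ Finset.range M, χ p (n : ZMod p) * (starRingEnd ℂ) (χ p' (n : ZMod p'))‖ ≤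
        M + B.card * (x:ℝ) ^ 2 := by
    intro p hp
    refine (norm_sum_le _ _).trans ?_
    have h3 : ∀ p' ∈ B, ‖(ε p * (starRingEnd ℂ) (ε p')) *
        ∑ n ∈ Finset.range M, χ p (n : ZMod p) * (starRingEnd ℂ) (χ p' (n : ZMod p'))‖ ≤
        (if p = p' then (M:ℝ) else 0) + (x:ℝ)^2 := by
      intro p' hp'
      rw [norm_mul, norm_mul, RCLike.norm_conj, hε, hε, one_mul, one_mul]
      have : Fact p.Prime := ⟨(hB p hp).1⟩
      have : Fact p'.Prime := ⟨(hB p' hp').1⟩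
      split_ifs with h
      · have : ‖∑ n ∈ Finset.range M, χ p (n : ZMod p) * (starRingEnd ℂ) (χ p' (n : ZMod p'))‖ ≤ M := by
          refine (norm_sum_le _ _).trans ?_
          calc _ ≤ ∑ n ∈ Finset.range M, (1:ℝ) := by
                refine Finset.sum_le_sum fun n _ => ?_
                rw [norm_mul, RCLike.norm_conj]
                exact mul_le_one₀ (DirichletCharacter.norm_le_one (χ p) _) (norm_nonneg _)
                  (DirichletCharacter.norm_le_one (χ p') _)
            _ = M := by simp
        have : 0 ≤ (x:ℝ)^2 := by positivity
        linarith
      · rw [zero_add]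
        refine (aux_corr p p' h (χ p) (χ p') (hB p hp).2.2 M).trans ?_
        rw [sq]
        have a1 : (p:ℝ) ≤ x := by exact_mod_cast (hB p hp).2.1
        have a2 : (p':ℝ) ≤ x := by exact_mod_cast (hB p' hp').2.1
        gcongr
    refine (Finset.sum_le_sum h3).trans ?_
    rw [Finset.sum_add_distrib]
    simp [hp]
  refine (norm_sum_le _ _).trans ((Finset.sum_le_sum h2).trans ?_)
  rw [Finset.sum_const, nsmul_eq_mul]

lemma aux_sieve (B : Finset ℕ) (χ : ∀ p : ℕ, MulChar (ZMod p) ℂ) (x Y k : ℕ)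
    (hB : ∀ p ∈ B, p.Prime ∧ p ≤ x ∧ χ p ≠ 1) (Q : Finset ℕ) (hQ : ∀ q ∈ Q, q.Prime ∧ q ≤ Y)
    (D : ℝ) (hD0 : 0 ≤ D) (hD : ∀ p ∈ B, D ≤ ‖∑ q ∈ Q, χ p (q : ZMod p)‖) :
    (B.card : ℝ) * D ^ (2 * k) ≤
      (k:ℝ) ^ k * (Q.card : ℝ) ^ k * ((Y ^ k + 1 : ℕ) + B.card * (x:ℝ) ^ 2) := by
  rcases B.eq_empty_or_nonempty with rfl | hBne
  · simp; positivity
  have hBpos : (0:ℝ) < B.card := by exact_mod_cast Finset.card_pos.2 hBne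
  set M := Y ^ k + 1 with hM
  choose ε hε hε2 using fun p : ℕ => RCLike.exists_norm_eq_mul_self (K := ℂ) ((∑ q ∈ Q, χ p (q : ZMod p)) ^ k)
  set F := Fintype.piFinset (fun _ : Fin k => Q) with hF
  set a : ℕ → ℕ := fun n => (F.filter (fun f => ∏ i, f i = n)).card with ha
  have hmaps : ∀ f ∈ F, ∏ i, f i ∈ Finset.range M := by
    intro f hf
    rw [hF, Fintype.mem_piFinset] at hf
    rw [Finset.mem_range, hM, Nat.lt_succ_iff]
    calc ∏ i, f i ≤ ∏ i : Fin k, Y := Finset.prod_le_prod' fun i _ => (hQ _ (hf i)).2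
      _ = Y ^ k := by simp
  have hpow : ∀ p : ℕ, (∑ q ∈ Q, χ p (q : ZMod p)) ^ k =
      ∑ n ∈ Finset.range M, (a n : ℂ) * χ p (n : ZMod p) := by
    intro p
    rw [Finset.sum_pow', ← Finset.sum_fiberwise_of_maps_to hmaps]
    refine Finset.sum_congr rfl fun n _ => ?_
    rw [ha, ← nsmul_eq_mul, ← Finset.sum_const]
    refine Finset.sum_congr rfl fun f hf => ?_
    rw [← (Finset.mem_filter.1 hf).2, Nat.cast_prod, map_prod]
  have ha1 : ∑ n ∈ Finset.range M, (a n : ℝ) = (Q.card : ℝ) ^ k := by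
    have : ∑ n ∈ Finset.range M, a n = Q.card ^ k := by
      rw [ha, ← Finset.card_eq_sum_card_fiberwise hmaps, hF]
      simp
    exact_mod_cast this
  have ha2 : ∑ n ∈ Finset.range M, (a n : ℝ) ^ 2 ≤ (k:ℝ) ^ k * (Q.card : ℝ) ^ k := by
    rw [← ha1, Finset.mul_sum]
    refine Finset.sum_le_sum fun n _ => ?_
    rw [sq]
    have : (a n : ℝ) ≤ (k:ℝ)^k := by
      exact_mod_cast aux_fiber k Q (fun q hq => (hQ q hq).1) n
    gcongr
  have hlow : (B.card : ℝ) * D ^ k ≤ ∑ n ∈ Finset.range M, (a n : ℝ) * ‖∑ p ∈ B, ε p * χ p (n : ZMod p)‖ := by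
    have e1 : ((∑ p ∈ B, ‖(∑ q ∈ Q, χ p (q : ZMod p)) ^ k‖ : ℝ) : ℂ) =
        ∑ n ∈ Finset.range M, (a n : ℂ) * ∑ p ∈ B, ε p * χ p (n : ZMod p) := by
      push_cast
      have : ∀ p ∈ B, ((‖(∑ q ∈ Q, χ p (q : ZMod p))‖ ^ k : ℝ) : ℂ) =
          ∑ n ∈ Finset.range M, (a n : ℂ) * (ε p * χ p (n : ZMod p)) := by
        intro p _
        have h := hε2 p
        rw [norm_pow] at h
        rw [show ((‖(∑ q ∈ Q, χ p (q : ZMod p))‖ ^ k : ℝ) : ℂ) = _ from h, hpow, Finset.mul_sum]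
        refine Finset.sum_congr rfl fun n _ => ?_
        ring
      push_cast at this
      simp_rw [norm_pow]
      push_cast
      rw [Finset.sum_congr rfl this, Finset.sum_comm]
      simp_rw [Finset.mul_sum]
    have e2 : (B.card : ℝ) * D ^ k ≤ ∑ p ∈ B, ‖(∑ q ∈ Q, χ p (q : ZMod p)) ^ k‖ := by
      rw [← nsmul_eq_mul, ← Finset.sum_const]
      refine Finset.sum_le_sum fun p hp => ?_
      rw [norm_pow]
      exact pow_le_pow_left₀ hD0 (hD p hp) k
    refine e2.trans ?_
    have hnn : 0 ≤ ∑ p ∈ B, ‖(∑ q ∈ Q, χ p (q : ZMod p)) ^ k‖ := by positivity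
    rw [← Complex.norm_of_nonneg hnn, e1]
    refine (norm_sum_le _ _).trans (le_of_eq ?_)
    refine Finset.sum_congr rfl fun n _ => ?_
    rw [norm_mul]; simp
  have hCS := Finset.sum_mul_sq_le_sq_mul_sq (Finset.range M) (fun n => (a n : ℝ))
    (fun n => ‖∑ p ∈ B, ε p * χ p (n : ZMod p)‖)
  have hT := aux_T B χ x M hB ε hε
  have hfin : ((B.card : ℝ) * D ^ k) ^ 2 ≤ (k:ℝ) ^ k * (Q.card : ℝ) ^ k *
      ((B.card : ℝ) * (M + B.card * (x:ℝ) ^ 2)) := by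
    calc _ ≤ (∑ n ∈ Finset.range M, (a n : ℝ) * ‖∑ p ∈ B, ε p * χ p (n : ZMod p)‖) ^ 2 := by
          gcongr
      _ ≤ _ := hCS
      _ ≤ _ := by gcongr
  have : (B.card : ℝ) * ((B.card : ℝ) * D ^ (2 * k)) ≤ (B.card : ℝ) *
      ((k:ℝ) ^ k * (Q.card : ℝ) ^ k * (M + B.card * (x:ℝ) ^ 2)) := by
    rw [mul_comm 2 k, pow_mul]
    nlinarith [hfin]
  exact le_of_mul_le_mul_left this hBpos

lemma aux_B_bound (x l k : ℕ) (B : Finset ℕ) (hl : 1 ≤ l) (hkl : k ≤ l) (hkx : 2 * x ^ 2 ≤ l ^ (186 * k))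
    (hP : l ^ 199 ≤ Nat.primeCounting (l ^ 200))
    (hB : ∀ p ∈ B, p.Prime ∧ p ≤ x ∧ l ^ 200 < p ∧ (p - 1).divisors.card ≤ l ^ 3 ∧
      ∀ q, q.Prime → q ≤ l ^ 200 → orderOf (q : ZMod p) ≠ p - 1) :
    B.card ≤ 4 * l ^ (14 * k) := by
  set Q := (Finset.range (l ^ 200 + 1)).filter Nat.Prime with hQ
  have hQmem : ∀ q ∈ Q, q.Prime ∧ q ≤ l ^ 200 := by
    intro q hq
    rw [hQ, Finset.mem_filter, Finset.mem_range] at hq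
    exact ⟨hq.2, by omega⟩
  have hQc : Q.card = Nat.primeCounting (l ^ 200) := by
    rw [Nat.primeCounting, Nat.primeCounting', Nat.count_eq_card_filter_range]
  have hlR : (1:ℝ) ≤ l := by exact_mod_cast hl
  have hPR : (l:ℝ) ^ 199 ≤ Q.card := by rw [hQc]; exact_mod_cast hP
  have hQpos : (0:ℝ) < Q.card := lt_of_lt_of_le (by positivity) hPR
  have hQne : Q.Nonempty := Finset.card_pos.1 (by exact_mod_cast hQpos)
  have hex : ∀ p : ℕ, ∃ χ : MulChar (ZMod p) ℂ, p ∈ B → χ ≠ 1 ∧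
      (Q.card : ℝ) / l ^ 6 ≤ ‖∑ q ∈ Q, χ (q : ZMod p)‖ := by
    intro p
    by_cases hp : p ∈ B
    · obtain ⟨h1, h2, h3, h4, h5⟩ := hB p hp
      have : Fact p.Prime := ⟨h1⟩
      obtain ⟨χ, hχ, hs⟩ := aux_bad_char p Q hQne (by
        intro q hq
        have := hQmem q hq
        rw [Nat.coprime_primes this.1 h1]
        omega) (fun q hq => h5 q (hQmem q hq).1 (hQmem q hq).2)
      refine ⟨χ, fun _ => ⟨hχ, ?_⟩⟩
      rw [div_le_iff₀ (by positivity)]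
      refine hs.trans ?_
      rw [mul_comm]
      have : ((p - 1).divisors.card : ℝ) ≤ (l:ℝ) ^ 3 := by exact_mod_cast h4
      calc _ ≤ ‖∑ q ∈ Q, χ (q : ZMod p)‖ * ((l:ℝ) ^ 3) ^ 2 := by gcongr
        _ = _ := by ring
    · exact ⟨1, fun h => absurd h hp⟩
  choose χ hχ using hex
  have hs := aux_sieve B χ x (l ^ 200) k (fun p hp => ⟨(hB p hp).1, (hB p hp).2.1, (hχ p hp).1⟩) Q hQmem
    ((Q.card : ℝ) / l ^ 6) (by positivity) (fun p hp => (hχ p hp).2)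
  set b : ℝ := (B.card : ℝ) with hb
  have hb0 : 0 ≤ b := by positivity
  set P : ℝ := (Q.card : ℝ) with hPdef
  set L : ℝ := (l : ℝ) ^ k with hL
  have hL1 : 1 ≤ L := one_le_pow₀ hlR
  have hkk : (k:ℝ) ^ k ≤ L := by
    have : (k:ℝ) ≤ l := by exact_mod_cast hkl
    rw [hL]; gcongr
  have hPk : L ^ 199 ≤ P ^ k := by
    rw [hL, ← pow_mul, mul_comm, pow_mul]; gcongr
  have hx : 2 * (x:ℝ) ^ 2 ≤ L ^ 186 := by
    rw [hL, ← pow_mul, mul_comm k]; exact_mod_cast hkx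
  have e1 : (P / (l:ℝ) ^ 6) ^ (2 * k) = P ^ k * P ^ k / L ^ 12 := by
    rw [div_pow, hL, ← pow_mul, ← pow_mul, ← pow_add]
    congr 2 <;> ring
  have e2 : (((l ^ 200) ^ k + 1 : ℕ) : ℝ) ≤ 2 * L ^ 200 := by
    push_cast
    rw [hL, ← pow_mul, ← pow_mul, mul_comm k]
    have : 1 ≤ (l:ℝ) ^ (200 * k) := one_le_pow₀ hlR
    linarith
  rw [e1] at hs
  have hPkpos : 0 < P ^ k := by positivity
  have hs2 : b * (P ^ k * P ^ k / L ^ 12) ≤ L * P ^ k * (2 * L ^ 200 + b * (x:ℝ) ^ 2) := by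
    refine hs.trans ?_
    gcongr
  have hs3 : b * P ^ k ≤ L ^ 13 * (2 * L ^ 200 + b * (x:ℝ) ^ 2) := by
    rw [← mul_div_assoc, div_le_iff₀ (by positivity)] at hs2
    have : P ^ k * (b * P ^ k) ≤ P ^ k * (L ^ 13 * (2 * L ^ 200 + b * (x:ℝ) ^ 2)) := by
      calc _ = b * (P ^ k * P ^ k) := by ring
        _ ≤ _ := hs2
        _ = _ := by ring
    exact le_of_mul_le_mul_left this hPkpos
  have hs4 : b * L ^ 199 ≤ 4 * L ^ 213 := by
    have a1 : b * L ^ 199 ≤ b * P ^ k := by gcongr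
    have a2 : L ^ 13 * (2 * L ^ 200 + b * (x:ℝ) ^ 2) ≤ L ^ 13 * (2 * L ^ 200 + b * (L ^ 186 / 2)) := by
      gcongr; linarith
    have a3 : L ^ 13 * (2 * L ^ 200 + b * (L ^ 186 / 2)) = 2 * L ^ 213 + b * L ^ 199 / 2 := by ring
    linarith
  have hs5 : b ≤ 4 * L ^ 14 := by
    have : L ^ 199 * b ≤ L ^ 199 * (4 * L ^ 14) := by
      calc _ = b * L ^ 199 := by ring
        _ ≤ _ := hs4
        _ = _ := by ring
    exact le_of_mul_le_mul_left this (by positivity)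
  rw [hL, ← pow_mul, mul_comm k, hb] at hs5
  exact_mod_cast hs5

lemma aux_divsum (x : ℕ) :
    ∑ n ∈ Finset.Ioc 0 x, (n.divisors.card : ℝ) ≤ x * (1 + Real.log x) := by
  have h1 : ∑ n ∈ Finset.Ioc 0 x, n.divisors.card = ∑ d ∈ Finset.Ioc 0 x, x / d := by
    have : ∀ n ∈ Finset.Ioc 0 x, n.divisors.card = ∑ d ∈ Finset.Ioc 0 x, if d ∣ n then 1 else 0 := by
      intro n hn
      rw [← Finset.sum_filter, ← Finset.card_eq_sum_ones]
      congr 1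
      ext d
      simp only [Nat.mem_divisors, Finset.mem_filter, Finset.mem_Ioc] at hn ⊢
      constructor
      · rintro ⟨h, h0⟩
        exact ⟨⟨Nat.pos_of_dvd_of_pos h hn.1, (Nat.le_of_dvd hn.1 h).trans hn.2⟩, h⟩
      · rintro ⟨_, h⟩
        exact ⟨h, by omega⟩
    rw [Finset.sum_congr rfl this, Finset.sum_comm]
    refine Finset.sum_congr rfl fun d _ => ?_
    rw [← Finset.sum_filter, ← Finset.card_eq_sum_ones, Nat.Ioc_filter_dvd_card_eq_div]
  have h2 : ∑ n ∈ Finset.Ioc 0 x, (n.divisors.card : ℝ) = ∑ d ∈ Finset.Ioc 0 x, ((x / d : ℕ) : ℝ) := by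
    exact_mod_cast h1
  rw [h2]
  have h3 := harmonic_le_one_add_log x
  have h4 : ((harmonic x : ℚ) : ℝ) = ∑ d ∈ Finset.Ioc 0 x, ((d:ℝ))⁻¹ := by
    rw [harmonic_eq_sum_Icc]; push_cast; rfl
  rw [h4] at h3
  calc _ ≤ ∑ d ∈ Finset.Ioc 0 x, (x:ℝ) * (d:ℝ)⁻¹ := by
        refine Finset.sum_le_sum fun d _ => ?_
        rw [← div_eq_mul_inv]; exact Nat.cast_div_le
    _ = x * ∑ d ∈ Finset.Ioc 0 x, ((d:ℝ))⁻¹ := by rw [Finset.mul_sum]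
    _ ≤ _ := by gcongr

lemma aux_tau_count (x m : ℕ) :
    (((Finset.range (x + 1)).filter (fun p : ℕ => p.Prime ∧ m < (p - 1).divisors.card)).card : ℝ) * m
      ≤ x * (1 + Real.log x) := by
  set S := (Finset.range (x + 1)).filter (fun p : ℕ => p.Prime ∧ m < (p - 1).divisors.card) with hS
  have hmem : ∀ p ∈ S, p ≤ x ∧ p.Prime ∧ m < (p - 1).divisors.card := by
    intro p hp
    rw [hS, Finset.mem_filter, Finset.mem_range] at hp
    exact ⟨by omega, hp.2⟩
  calc (S.card : ℝ) * m = ∑ p ∈ S, (m : ℝ) := by simp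
    _ ≤ ∑ p ∈ S, ((p - 1).divisors.card : ℝ) := by
        refine Finset.sum_le_sum fun p hp => ?_
        exact_mod_cast (hmem p hp).2.2.le
    _ = ∑ n ∈ S.image (fun p => p - 1), (n.divisors.card : ℝ) := by
        rw [Finset.sum_image]
        intro a ha b hb hab
        have := (hmem a ha).2.1.two_le
        have := (hmem b hb).2.1.two_le
        simp only at hab
        omega
    _ ≤ ∑ n ∈ Finset.Ioc 0 x, (n.divisors.card : ℝ) := by
        apply Finset.sum_le_sum_of_subset_of_nonneg
        · intro n hn
          rw [Finset.mem_image] at hn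
          obtain ⟨p, hp, rfl⟩ := hn
          have := (hmem p hp).2.1.two_le
          have := (hmem p hp).1
          rw [Finset.mem_Ioc]; omega
        · intros; positivity
    _ ≤ _ := aux_divsum x

lemma aux_pi_lower : ∀ᶠ n : ℕ in Filter.atTop, (n : ℝ) / 2 ≤ Nat.primeCounting n * Real.log n := by
  have h1 : ∀ᶠ n : ℕ in Filter.atTop, Real.log ((n:ℝ) + 1) ≤ 1 / 20 * ((n:ℝ) + 1) := by
    have := (Real.isLittleO_log_id_atTop.bound (show (0:ℝ) < 1/20 by norm_num))
    have h2 : Filter.Tendsto (fun n : ℕ => (n:ℝ) + 1) Filter.atTop Filter.atTop :=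
      Filter.tendsto_atTop_add_const_right _ _ tendsto_natCast_atTop_atTop
    filter_upwards [h2.eventually this] with n hn
    simp only [id, Real.norm_eq_abs] at hn
    rw [abs_of_nonneg (show (0:ℝ) ≤ (n:ℝ)+1 by positivity)] at hn
    exact (le_abs_self _).trans hn
  filter_upwards [h1, Filter.eventually_ge_atTop 10] with n hn hn10
  have h := Chebyshev.pi_ge n
  have hn' : (10:ℝ) ≤ n := by exact_mod_cast hn10
  have hlog : 0 < Real.log n := Real.log_pos (by linarith)
  rw [div_le_iff₀ hlog] at h
  have := Real.log_two_gt_d9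
  nlinarith

lemma aux_event : ∀ᶠ l : ℕ in Filter.atTop, 2 ≤ l ∧ l ^ 400 ≤ 2 ^ l ∧
    l ^ 199 ≤ Nat.primeCounting (l ^ 200) := by
  have h1 : ∀ᶠ l : ℕ in Filter.atTop, l ^ 400 ≤ 2 ^ l := by
    have := (isLittleO_pow_const_const_pow_of_one_lt (R := ℝ) 400 (show (1:ℝ) < 2 by norm_num)).bound
      (show (0:ℝ) < 1 by norm_num)
    filter_upwards [this] with l hl
    simp only [norm_pow, RCLike.norm_natCast, one_mul] at hl
    have h2 : ‖(2:ℝ)‖ = 2 := by norm_num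
    rw [h2] at hl
    exact_mod_cast hl
  have h2 : ∀ᶠ l : ℕ in Filter.atTop, Real.log (l:ℝ) ≤ 1 / 400 * (l:ℝ) := by
    have := (Real.isLittleO_log_id_atTop.bound (show (0:ℝ) < 1/400 by norm_num))
    filter_upwards [tendsto_natCast_atTop_atTop.eventually this] with n hn
    simp only [id, Real.norm_eq_abs] at hn
    rw [abs_of_nonneg (show (0:ℝ) ≤ (n:ℝ) by positivity)] at hn
    exact (le_abs_self _).trans hn
  have h3 : Filter.Tendsto (fun l : ℕ => l ^ 200) Filter.atTop Filter.atTop :=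
    Filter.tendsto_pow_atTop (by norm_num)
  filter_upwards [h1, h2, h3.eventually aux_pi_lower, Filter.eventually_ge_atTop 2] with l a1 a2 a3 a4
  refine ⟨a4, a1, ?_⟩
  have hl : (0:ℝ) < l := by exact_mod_cast (by omega : 0 < l)
  push_cast at a3
  rw [Real.log_pow] at a3
  have : (l:ℝ) * (l:ℝ) ^ 199 ≤ l * Nat.primeCounting (l ^ 200) := by
    have h5 : (Nat.primeCounting (l ^ 200) : ℝ) * (((200:ℕ):ℝ) * Real.log l) ≤
        (Nat.primeCounting (l ^ 200) : ℝ) * (200 * (1/400 * l)) := by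
      push_cast
      gcongr
    have h6 : (l:ℝ) * (l:ℝ) ^ 199 = (l:ℝ) ^ 200 := by ring
    rw [h6]
    linarith
  exact_mod_cast le_of_mul_le_mul_left this hl

lemma aux_final (x l : ℕ) (hl : l = Nat.log 2 x) (hx : x ≠ 0) (h2 : 2 ≤ l) (h400 : l ^ 400 ≤ 2 ^ l)
    (hP : l ^ 199 ≤ Nat.primeCounting (l ^ 200))
    (hpi : (x : ℝ) / 2 ≤ Nat.primeCounting x * Real.log x) (G : Finset ℕ)
    (hG : ∀ p ∈ G, p ≤ x ∧ p.Prime ∧ ¬ ∃ q : ℕ, q.Prime ∧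
      (q : ℝ) ≤ (3:ℝ) ^ 200 * Real.log p ^ (200:ℝ) ∧ orderOf ((q : ZMod p)) = p - 1) :
    (G.card : ℝ) / (Nat.primeCounting x : ℝ) ≤ 36 / l := by
  have hlx : 2 ^ l ≤ x := by rw [hl]; exact Nat.pow_log_le_self 2 hx
  have hxl : x < 2 ^ (l + 1) := by rw [hl]; exact Nat.lt_pow_succ_log_self (by norm_num) x
  have hx400 : l ^ 400 ≤ x := h400.trans hlx
  have hsq : l ^ 200 ≤ Nat.sqrt x := by
    rw [Nat.le_sqrt]
    calc l ^ 200 * l ^ 200 = l ^ 400 := by ring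
      _ ≤ x := hx400
  -- the parameter k
  set k := Nat.log (l ^ 28) x with hk
  have hb : 1 < l ^ 28 := Nat.one_lt_pow (by norm_num) (by omega)
  have hk1 : (l ^ 28) ^ k ≤ x := Nat.pow_log_le_self _ hx
  have hk2 : x < (l ^ 28) ^ (k + 1) := Nat.lt_pow_succ_log_self hb x
  have hkpos : 1 ≤ k := by
    apply Nat.log_pos hb
    exact (Nat.pow_le_pow_right (by omega) (by norm_num)).trans hx400
  have hkl : k ≤ l := by
    have : 2 ^ (28 * k) < 2 ^ (l + 1) := by
      calc 2 ^ (28 * k) = (2 ^ 28) ^ k := by rw [pow_mul]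
        _ ≤ (l ^ 28) ^ k := by gcongr
        _ ≤ x := hk1
        _ < _ := hxl
    have := (Nat.pow_lt_pow_iff_right (by norm_num : 1 < 2)).1 this
    omega
  have hkx : 2 * x ^ 2 ≤ l ^ (186 * k) := by
    calc 2 * x ^ 2 ≤ l * ((l ^ 28) ^ (k + 1)) ^ 2 := by gcongr
      _ = l ^ (1 + 56 * (k + 1)) := by rw [← pow_mul, ← pow_mul, ← pow_succ']; congr 1; ring
      _ ≤ l ^ (186 * k) := Nat.pow_le_pow_right (by omega) (by omega)
  have hk14 : l ^ (14 * k) ≤ Nat.sqrt x := by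
    rw [Nat.le_sqrt, ← pow_add]
    calc l ^ (14 * k + 14 * k) = (l ^ 28) ^ k := by rw [← pow_mul]; congr 1; ring
      _ ≤ x := hk1
  -- logs
  have hlog2 := Real.log_two_gt_d9
  have hlog2' := Real.log_two_lt_d9
  have hxR : (0:ℝ) < x := by exact_mod_cast Nat.pos_of_ne_zero hx
  have hlR : (2:ℝ) ≤ l := by exact_mod_cast h2
  have hlogx1 : (l:ℝ) * Real.log 2 ≤ Real.log x := by
    rw [← Real.log_pow]
    apply Real.log_le_log (by positivity)
    exact_mod_cast hlx
  have hlogx2 : Real.log x ≤ 2 * l := by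
    have : Real.log x ≤ ((l + 1 : ℕ) : ℝ) * Real.log 2 := by
      rw [← Real.log_pow]
      apply Real.log_le_log hxR
      exact_mod_cast hxl.le
    push_cast at this
    nlinarith
  -- split
  set S := (Finset.range (x + 1)).filter (fun p : ℕ => p.Prime ∧ l ^ 3 < (p - 1).divisors.card) with hS
  set B := G.filter (fun p => Nat.sqrt x < p ∧ (p - 1).divisors.card ≤ l ^ 3) with hBdef
  have hsub : G ⊆ Finset.range (Nat.sqrt x + 1) ∪ (S ∪ B) := by
    intro p hp
    have := hG p hp
    simp only [hS, hBdef, Finset.mem_union, Finset.mem_filter, Finset.mem_range]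
    rcases lt_or_ge (Nat.sqrt x) p with h | h
    · rcases lt_or_ge (l ^ 3) (p - 1).divisors.card with h' | h'
      · exact Or.inr (Or.inl ⟨by omega, this.2.1, h'⟩)
      · exact Or.inr (Or.inr ⟨hp, h, h'⟩)
    · left; omega
  have hBcard : B.card ≤ 4 * l ^ (14 * k) := by
    apply aux_B_bound x l k B (by omega) hkl hkx hP
    intro p hp
    rw [hBdef, Finset.mem_filter] at hp
    obtain ⟨hpG, hps, hpt⟩ := hp
    obtain ⟨g1, g2, g3⟩ := hG p hpG
    refine ⟨g2, g1, by omega, hpt, ?_⟩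
    intro q hq hql ho
    apply g3
    refine ⟨q, hq, ?_, ho⟩
    have hpp : x < p ^ 2 := by rw [sq]; exact Nat.sqrt_lt.1 hps
    have hlp : Real.log x ≤ 2 * Real.log p := by
      have : Real.log x ≤ Real.log ((p:ℝ) ^ 2) := by
        apply Real.log_le_log hxR
        exact_mod_cast hpp.le
      rw [Real.log_pow] at this
      exact_mod_cast this
    have hlp3 : (l:ℝ) ≤ 3 * Real.log p := by nlinarith
    have e : Real.log p ^ (200:ℝ) = Real.log p ^ (200:ℕ) := by
      rw [← Real.rpow_natCast]; norm_num
    rw [e, ← mul_pow]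
    calc (q:ℝ) ≤ (l:ℝ) ^ 200 := by exact_mod_cast hql
      _ ≤ _ := by gcongr
  have hScard := aux_tau_count x (l ^ 3)
  rw [← hS] at hScard
  have hcard : G.card ≤ (Nat.sqrt x + 1) + (S.card + B.card) := by
    refine (Finset.card_le_card hsub).trans ((Finset.card_union_le _ _).trans ?_)
    rw [Finset.card_range]
    gcongr
    exact Finset.card_union_le _ _
  have hs1 : 1 ≤ Nat.sqrt x := le_trans (Nat.one_le_pow _ _ (by omega)) hsq
  have hsx : Nat.sqrt x * l ^ 2 ≤ x := by
    calc Nat.sqrt x * l ^ 2 ≤ Nat.sqrt x * l ^ 200 := by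
          gcongr <;> omega
      _ ≤ Nat.sqrt x * Nat.sqrt x := by gcongr
      _ ≤ x := Nat.sqrt_le x
  have hG6 : G.card ≤ 6 * Nat.sqrt x + S.card := by omega
  have hsxR : (Nat.sqrt x : ℝ) * (l:ℝ) ^ 2 ≤ x := by exact_mod_cast hsx
  have hSR : (S.card : ℝ) * (l:ℝ) ^ 2 ≤ 3 * x := by
    push_cast at hScard
    have a : (S.card : ℝ) * (l:ℝ) ^ 3 ≤ x * (3 * l) := by
      refine hScard.trans ?_
      gcongr
      linarith
    have : (l:ℝ) * ((S.card : ℝ) * (l:ℝ) ^ 2) ≤ l * (3 * x) := by nlinarith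
    exact le_of_mul_le_mul_left this (by linarith)
  have hGR : (G.card : ℝ) * (l:ℝ) ^ 2 ≤ 9 * x := by
    have : (G.card : ℝ) ≤ 6 * Nat.sqrt x + S.card := by exact_mod_cast hG6
    calc (G.card : ℝ) * (l:ℝ) ^ 2 ≤ (6 * Nat.sqrt x + S.card) * (l:ℝ) ^ 2 := by gcongr
      _ ≤ 9 * (x:ℝ) := by linarith
  have hpi2 : (x:ℝ) ≤ Nat.primeCounting x * (4 * l) := by
    have : (Nat.primeCounting x : ℝ) * Real.log x ≤ Nat.primeCounting x * (2 * l) := by gcongr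
    linarith
  have hpipos : (0:ℝ) < Nat.primeCounting x := by
    by_contra h
    have : (Nat.primeCounting x : ℝ) = 0 := le_antisymm (not_lt.1 h) (by positivity)
    rw [this] at hpi2
    linarith
  have hlpos : (0:ℝ) < l := by linarith
  rw [div_le_div_iff₀ hpipos hlpos]
  have : (l:ℝ) * ((G.card : ℝ) * l) ≤ l * (36 * Nat.primeCounting x) := by nlinarith
  exact le_of_mul_le_mul_left this hlpos

open Finset
open scoped Classical

/-- There exist constants `c > 1` and `C > 0` such that the set of primes `p` having no
prime primitive root `q ≤ C * (log p) ^ c` has relative density zero in the primes. -/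
theorem almost_all_primes_have_small_prime_primitive_root :
    ∃ c : ℝ, 1 < c ∧ ∃ C : ℝ, 0 < C ∧
      Filter.Tendsto
        (fun x : ℕ =>
          (((Finset.range (x + 1)).filter (fun p : ℕ => p.Prime ∧
              ¬ ∃ q : ℕ, q.Prime ∧ (q : ℝ) ≤ C * Real.log p ^ c ∧
                orderOf ((q : ZMod p)) = p - 1)).card : ℝ) / (Nat.primeCounting x : ℝ))
        Filter.atTop (nhds 0) := by
  refine ⟨200, by norm_num, 3 ^ 200, by positivity, ?_⟩
  have hlog : Filter.Tendsto (fun x : ℕ => Nat.log 2 x) Filter.atTop Filter.atTop := by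
    rw [Filter.tendsto_atTop]
    intro b
    filter_upwards [Filter.eventually_ge_atTop (2 ^ b)] with x hx
    exact Nat.le_log_of_pow_le (by norm_num) hx
  have hlim : Filter.Tendsto (fun x : ℕ => (36:ℝ) / (Nat.log 2 x : ℕ)) Filter.atTop (nhds 0) :=
    (tendsto_const_nhds.div_atTop tendsto_natCast_atTop_atTop).comp hlog
  refine squeeze_zero' (Filter.Eventually.of_forall fun x => by positivity) ?_ hlim
  filter_upwards [hlog.eventually aux_event, aux_pi_lower, Filter.eventually_ge_atTop 1]
    with x ⟨a1, a2, a3⟩ a4 a5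
  refine aux_final x (Nat.log 2 x) rfl (by omega) a1 a2 a3 a4 _ ?_
  intro p hp
  rw [Finset.mem_filter, Finset.mem_range] at hp
  exact ⟨by omega, hp.2⟩
end

section
/- There is a constant C > 0 such that almost every integer n satisfies ω(n) ≤ C log log n; precisely, (#{n : 3 ≤ n ≤ x and ω(n) > C log log n}) / x → 0 as x → ∞. -/
open Finset
open scoped Classical

lemma two_pow_omega_le (n : ℕ) (hn : n ≠ 0) : 2 ^ n.primeFactors.card ≤ n.divisors.card := by
  rw [Nat.card_divisors hn, ← Finset.prod_const]
  refine Finset.prod_le_prod' fun p hp => ?_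
  have h := (Nat.prime_of_mem_primeFactors hp).factorization_pos_of_dvd hn
    (Nat.dvd_of_mem_primeFactors hp)
  omega

lemma sum_divisors_card_le (x : ℝ) (hx : 1 ≤ x) :
    ∑ n ∈ Finset.Ioc 0 ⌊x⌋₊, (n.divisors.card : ℝ) ≤ x * (1 + Real.log x) := by
  have h := ArithmeticFunction.sum_Ioc_sigma0_eq_sum_div ⌊x⌋₊
  simp only [ArithmeticFunction.sigma_zero_apply] at h
  have h2 : ∑ n ∈ Finset.Ioc 0 ⌊x⌋₊, (n.divisors.card : ℝ)
      = ∑ n ∈ Finset.Ioc 0 ⌊x⌋₊, ((⌊x⌋₊ / n : ℕ) : ℝ) := by exact_mod_cast h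
  have h3 := harmonic_floor_le_one_add_log x hx
  rw [harmonic_eq_sum_Icc] at h3
  push_cast at h3
  rw [h2]
  calc _ ≤ ∑ n ∈ Finset.Ioc 0 ⌊x⌋₊, x * ((n : ℝ)⁻¹) := by
        refine Finset.sum_le_sum fun n _ => ?_
        refine Nat.cast_div_le.trans ?_
        rw [div_eq_mul_inv]
        gcongr
        exact Nat.floor_le (by linarith)
    _ = x * ∑ n ∈ Finset.Icc 1 ⌊x⌋₊, ((n : ℝ)⁻¹) := by
        rw [← Finset.mul_sum]; rfl
    _ ≤ _ := by gcongr

lemma bad_le (n : ℕ) (hn : 3 ≤ n)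
    (h : 3 * Real.log (Real.log n) < (n.primeFactors.card : ℝ)) :
    (Real.log n) ^ 2 ≤ n.divisors.card := by
  have hl : 1 ≤ Real.log n := by
    rw [Real.le_log_iff_exp_le (by positivity)]
    have : (3 : ℝ) ≤ n := by exact_mod_cast hn
    linarith [Real.exp_one_lt_d9]
  have h0 : 0 ≤ Real.log (Real.log n) := Real.log_nonneg hl
  have h1 : (2 : ℝ) ^ n.primeFactors.card ≤ n.divisors.card := by
    exact_mod_cast two_pow_omega_le n (by omega)
  refine le_trans ?_ h1
  rw [← Real.log_le_log_iff (by positivity) (by positivity), Real.log_pow, Real.log_pow]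
  push_cast
  nlinarith [Real.log_two_gt_d9]

lemma count_le (x : ℝ) (hx : 3 ≤ x) :
    ((((Finset.Icc 3 ⌊x⌋₊).filter
      (fun n : ℕ => 3 * Real.log (Real.log n) < (n.primeFactors.card : ℝ))).card : ℝ))
      ≤ Real.sqrt x + 4 / (Real.log x) ^ 2 * (x * (1 + Real.log x)) := by
  have hL : 0 < Real.log x := Real.log_pos (by linarith)
  set B := (Finset.Icc 3 ⌊x⌋₊).filter
      (fun n : ℕ => 3 * Real.log (Real.log n) < (n.primeFactors.card : ℝ)) with hB
  have hsub : B ⊆ Finset.Ioc 0 ⌊Real.sqrt x⌋₊ ∪ B.filter (fun n : ℕ => Real.sqrt x < n) := by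
    intro n hn
    rw [Finset.mem_union]
    by_cases hc : Real.sqrt x < n
    · right; exact Finset.mem_filter.2 ⟨hn, hc⟩
    · left
      have h3 := (Finset.mem_Icc.1 (Finset.mem_filter.1 hn).1).1
      exact Finset.mem_Ioc.2 ⟨by omega, Nat.le_floor (not_lt.1 hc)⟩
  have hc1 := (Finset.card_le_card hsub).trans (Finset.card_union_le _ _)
  have hc2 : (B.card : ℝ) ≤ ⌊Real.sqrt x⌋₊ + ((B.filter (fun n : ℕ => Real.sqrt x < n)).card : ℝ) := by
    rw [Nat.card_Ioc] at hc1
    exact_mod_cast hc1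
  refine hc2.trans (add_le_add (Nat.floor_le (Real.sqrt_nonneg x)) ?_)
  refine le_trans ?_ (mul_le_mul_of_nonneg_left (sum_divisors_card_le x (by linarith))
    (by positivity))
  rw [Finset.card_eq_sum_ones, Nat.cast_sum, Finset.mul_sum]
  refine (Finset.sum_le_sum (g := fun n : ℕ => 4 / (Real.log x) ^ 2 * (n.divisors.card : ℝ))
    ?_).trans (Finset.sum_le_sum_of_subset_of_nonneg ?_ ?_)
  · intro n hn
    obtain ⟨hn, hs⟩ := Finset.mem_filter.1 hn
    obtain ⟨hn, hb⟩ := Finset.mem_filter.1 hn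
    have h3 := Finset.mem_Icc.1 hn
    have h4 := bad_le n h3.1 hb
    have h5 : Real.log x / 2 ≤ Real.log n := by
      rw [← Real.log_sqrt (by linarith)]
      exact Real.log_le_log (Real.sqrt_pos.2 (by linarith)) hs.le
    rw [div_mul_eq_mul_div, le_div_iff₀ (by positivity)]
    push_cast
    nlinarith
  · intro n hn
    have h3 := Finset.mem_Icc.1 (Finset.mem_filter.1 (Finset.mem_filter.1 hn).1).1
    exact Finset.mem_Ioc.2 ⟨by omega, h3.2⟩
  · intros; positivity

/-- There is `C > 0` such that almost every integer `n` satisfies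
`ω(n) ≤ C log log n`: the proportion of `3 ≤ n ≤ x` with `ω(n) > C log log n` tends
to `0` as `x → ∞`. -/
theorem omega_almost_all_le :
    ∃ C : ℝ, 0 < C ∧
      Filter.Tendsto
        (fun x : ℝ =>
          (((Finset.Icc 3 ⌊x⌋₊).filter
              (fun n : ℕ => C * Real.log (Real.log n) < (n.primeFactors.card : ℝ))).card : ℝ)
            / x)
        Filter.atTop (nhds 0) := by
  refine ⟨3, by norm_num, ?_⟩
  have t1 : Filter.Tendsto (fun x : ℝ => (Real.sqrt x)⁻¹) Filter.atTop (nhds 0) :=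
    tendsto_inv_atTop_zero.comp Real.tendsto_sqrt_atTop
  have t2 : Filter.Tendsto (fun x : ℝ => (Real.log x)⁻¹) Filter.atTop (nhds 0) :=
    tendsto_inv_atTop_zero.comp Real.tendsto_log_atTop
  have t3 : Filter.Tendsto (fun x : ℝ => (Real.sqrt x)⁻¹ +
      (4 * ((Real.log x)⁻¹ * (Real.log x)⁻¹) + 4 * (Real.log x)⁻¹)) Filter.atTop (nhds 0) := by
    simpa using t1.add (((t2.mul t2).const_mul 4).add (t2.const_mul 4))
  refine squeeze_zero' ?_ ?_ t3
  · filter_upwards [Filter.eventually_ge_atTop 3] with x hx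
    have : 0 < x := by linarith
    positivity
  · filter_upwards [Filter.eventually_ge_atTop 3] with x hx
    have hx0 : 0 < x := by linarith
    have hL : 0 < Real.log x := Real.log_pos (by linarith)
    have hs : 0 < Real.sqrt x := Real.sqrt_pos.2 hx0
    rw [div_le_iff₀ hx0]
    refine (count_le x hx).trans (le_of_eq ?_)
    rw [add_mul]
    congr 1
    · rw [eq_inv_mul_iff_mul_eq₀ hs.ne']; exact Real.mul_self_sqrt hx0.le
    · field_simp
end

section
/- There exist a real constant B₁ (the Mertens constant, B₁ = lim_{x→∞} (Σ_{p ≤ x, p prime} 1/p − log log x)) and a constant C > 0 such that for all real x ≥ 3: | Σ_{n ≤ x} ω(n) − (x log log x + B₁ x) | ≤ C x / log x. -/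
open Finset

lemma aux_logfact (n : ℕ) : Real.log (n.factorial : ℝ) =
    ∑ p ∈ (Icc 1 n).filter Nat.Prime, (n.factorial.factorization p : ℝ) * Real.log p := by
  rw [Real.log_nat_eq_sum_factorization]
  apply Finsupp.sum_of_support_subset
  · intro p hp
    have hp' : p ∈ n.factorial.primeFactors := hp
    rw [Nat.mem_primeFactors] at hp'
    simp only [mem_filter, mem_Icc]
    exact ⟨⟨hp'.1.one_le, (hp'.1.dvd_factorial).1 hp'.2.1⟩, hp'.1⟩
  · simp

lemma aux_div_le_fact {n p : ℕ} (hp : p.Prime) : n / p ≤ n.factorial.factorization p := by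
  by_cases h : n < p
  · simp [Nat.div_eq_of_lt h]
  · push Not at h
    rw [Nat.factorization_factorial hp (Nat.lt_add_one _)]
    have : (1:ℕ) ∈ Ico 1 (Nat.log p n + 1) := by
      simp only [mem_Ico, le_refl, true_and]
      have := Nat.log_pos hp.one_lt h
      omega
    have := single_le_sum (f := fun i => n / p ^ i) (fun i _ => Nat.zero_le _) this
    simpa using this

lemma aux_summ : ∃ K : ℝ, 0 ≤ K ∧ ∀ n : ℕ,
    ∑ p ∈ (Icc 1 n).filter Nat.Prime, Real.log p / ((p:ℝ) * (p - 1)) ≤ K := by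
  have hs : Summable (fun m : ℕ => 4 * ((m:ℝ) ^ (3/2:ℝ))⁻¹) :=
    (Real.summable_nat_rpow_inv.2 (by norm_num)).mul_left 4
  refine ⟨∑' m : ℕ, 4 * ((m:ℝ) ^ (3/2:ℝ))⁻¹, tsum_nonneg (fun m => by positivity), fun n => ?_⟩
  refine le_trans (sum_le_sum ?_) (hs.sum_le_tsum _ (fun m _ => by positivity))
  intro p hp
  have hp2 : (2:ℝ) ≤ p := by exact_mod_cast (mem_filter.1 hp).2.two_le
  have h1 := Real.log_le_rpow_div (x := p) (by linarith) (ε := 1/2) (by norm_num)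
  have h3 : (p:ℝ) ^ (3/2:ℝ) * (p:ℝ) ^ (1/2:ℝ) = p * p := by
    rw [← Real.rpow_add (by linarith)]; norm_num; ring
  have hpos : 0 < (p:ℝ) ^ (3/2:ℝ) := by positivity
  rw [div_le_iff₀ (by nlinarith), mul_comm 4, mul_assoc, inv_mul_eq_div, le_div_iff₀ hpos]
  calc Real.log p * (p:ℝ) ^ (3/2:ℝ) ≤ ((p:ℝ) ^ (1/2:ℝ) / (1/2)) * (p:ℝ) ^ (3/2:ℝ) := by gcongr
    _ = 2 * (p * p) := by rw [← h3]; ring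
    _ ≤ 4 * (p * (p - 1)) := by nlinarith

lemma aux_M1 : ∃ K : ℝ, 0 ≤ K ∧ ∀ n : ℕ, 1 ≤ n →
    |∑ p ∈ (Icc 1 n).filter Nat.Prime, Real.log p / (p:ℝ) - Real.log n| ≤ K := by
  obtain ⟨K, hK0, hK⟩ := aux_summ
  refine ⟨K + Real.log 4 + 1, by positivity, fun n hn => ?_⟩
  have hn0 : (0:ℝ) < n := by exact_mod_cast hn
  have hu : Real.log (n.factorial : ℝ) ≤ n * Real.log n := by
    rw [← Real.log_pow]
    exact Real.log_le_log (by positivity) (by exact_mod_cast Nat.factorial_le_pow n)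
  have hl : n * Real.log n - n ≤ Real.log (n.factorial : ℝ) := by
    have := Real.pow_div_factorial_le_exp (x := n) hn0.le n
    have := Real.log_le_log (by positivity) this
    rw [Real.log_exp, Real.log_div (by positivity) (by positivity), Real.log_pow] at this
    linarith
  have hth : ∑ p ∈ (Icc 1 n).filter Nat.Prime, Real.log p ≤ Real.log 4 * n := by
    have := Chebyshev.theta_le_log4_mul_x (x := n) hn0.le
    rw [Chebyshev.theta, Nat.floor_natCast] at this
    exact this
  rw [aux_logfact] at hu hl
  have h1 : ∑ p ∈ (Icc 1 n).filter Nat.Prime, ((n:ℝ) * (Real.log p / p) - Real.log p) ≤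
      ∑ p ∈ (Icc 1 n).filter Nat.Prime, (n.factorial.factorization p : ℝ) * Real.log p := by
    refine sum_le_sum fun p hp => ?_
    have hp' := (mem_filter.1 hp).2
    have hp0 : (0:ℝ) < p := by exact_mod_cast hp'.pos
    have : ((n / p : ℕ):ℝ) ≤ n.factorial.factorization p := by exact_mod_cast aux_div_le_fact hp'
    have h2 : (n:ℝ) / p - 1 ≤ ((n / p : ℕ):ℝ) := by
      rw [← Nat.floor_div_eq_div (K := ℝ)]
      exact (Nat.sub_one_lt_floor _).le
    have h3 := Real.log_natCast_nonneg p
    calc (n:ℝ) * (Real.log p / p) - Real.log p = ((n:ℝ) / p - 1) * Real.log p := by ring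
      _ ≤ _ := by gcongr; linarith
  have h2 : ∑ p ∈ (Icc 1 n).filter Nat.Prime, (n.factorial.factorization p : ℝ) * Real.log p ≤
      ∑ p ∈ (Icc 1 n).filter Nat.Prime,
        ((n:ℝ) * (Real.log p / p) + n * (Real.log p / ((p:ℝ) * (p - 1)))) := by
    refine sum_le_sum fun p hp => ?_
    have hp' := (mem_filter.1 hp).2
    have hp0 : (2:ℝ) ≤ p := by exact_mod_cast hp'.two_le
    have hp1 : (p:ℝ) - 1 ≠ 0 := by linarith
    have : (n.factorial.factorization p : ℝ) ≤ ((n / (p - 1) : ℕ):ℝ) := by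
      exact_mod_cast Nat.factorization_factorial_le_div_pred hp' n
    have h2 : ((n / (p - 1) : ℕ):ℝ) ≤ n / (p - 1) := by
      have := Nat.cast_div_le (α := ℝ) (m := n) (n := p - 1)
      rwa [Nat.cast_sub hp'.one_le, Nat.cast_one] at this
    have h3 := Real.log_natCast_nonneg p
    calc (n.factorial.factorization p : ℝ) * Real.log p ≤ (n / (p - 1)) * Real.log p := by
          gcongr; linarith
      _ = _ := by field_simp; ring
  rw [sum_sub_distrib, ← mul_sum] at h1
  rw [sum_add_distrib, ← mul_sum, ← mul_sum] at h2
  have h4 : 0 ≤ Real.log 4 := by positivity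
  have hKn := hK n
  generalize (∑ p ∈ (Icc 1 n).filter Nat.Prime, Real.log p / (p:ℝ)) = S at *
  generalize (∑ p ∈ (Icc 1 n).filter Nat.Prime, Real.log p / ((p:ℝ) * (p - 1))) = T at *
  rw [abs_le]
  constructor
  · have : (n:ℝ) * (Real.log n - 1) ≤ n * (S + T) := by linarith
    have := le_of_mul_le_mul_left this hn0
    linarith
  · have : (n:ℝ) * S ≤ n * (Real.log n + Real.log 4) := by linarith
    have := le_of_mul_le_mul_left this hn0
    linarith

lemma aux_M1' : ∃ K : ℝ, 0 ≤ K ∧ ∀ x : ℝ, 1 ≤ x →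
    |∑ n ∈ Icc 0 ⌊x⌋₊, (if n.Prime then Real.log n / (n:ℝ) else 0) - Real.log x| ≤ K := by
  obtain ⟨K, hK0, hK⟩ := aux_M1
  refine ⟨K + Real.log 2, by positivity, fun x hx => ?_⟩
  have hn : 1 ≤ ⌊x⌋₊ := Nat.le_floor (by simpa using hx)
  have h := hK _ hn
  have he : ∑ n ∈ Icc 0 ⌊x⌋₊, (if n.Prime then Real.log n / (n:ℝ) else 0) =
      ∑ p ∈ (Icc 1 ⌊x⌋₊).filter Nat.Prime, Real.log p / (p:ℝ) := by
    rw [← sum_filter]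
    congr 1
  have hn' : (1:ℝ) ≤ ⌊x⌋₊ := by exact_mod_cast hn
  have h1 : Real.log ⌊x⌋₊ ≤ Real.log x := Real.log_le_log (by linarith) (Nat.floor_le (by linarith))
  have h2 : Real.log x ≤ Real.log 2 + Real.log ⌊x⌋₊ := by
    rw [← Real.log_mul (by norm_num) (by linarith)]
    apply Real.log_le_log (by linarith)
    linarith [Nat.lt_floor_add_one x]
  rw [he]
  rw [abs_le] at h ⊢
  have := Real.log_nonneg (x := 2) (by norm_num)
  constructor <;> linarith

lemma aux_omega (N : ℕ) : ∑ n ∈ Icc 1 N, (n.primeFactors.card : ℝ) =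
    ∑ p ∈ (Icc 1 N).filter Nat.Prime, ((N / p : ℕ) : ℝ) := by
  have : ∀ n ∈ Icc 1 N, (n.primeFactors.card : ℝ) =
      ∑ p ∈ (Icc 1 N).filter Nat.Prime, if p ∣ n then (1:ℝ) else 0 := by
    intro n hn
    rw [mem_Icc] at hn
    rw [sum_boole]
    congr 2
    ext p
    simp only [mem_filter, mem_Icc, Nat.mem_primeFactors]
    constructor
    · rintro ⟨h1, h2, h3⟩
      exact ⟨⟨⟨h1.one_le, (Nat.le_of_dvd (by omega) h2).trans hn.2⟩, h1⟩, h2⟩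
    · rintro ⟨⟨h1, h2⟩, h3⟩
      exact ⟨h2, h3, by omega⟩
  rw [sum_congr rfl this, sum_comm]
  refine sum_congr rfl fun p hp => ?_
  rw [sum_boole, ← Nat.Ioc_filter_dvd_card_eq_div]
  rfl

lemma aux_omega_bd : ∃ C : ℝ, 0 < C ∧ ∀ x : ℝ, 3 ≤ x →
    |∑ n ∈ Icc 1 ⌊x⌋₊, (n.primeFactors.card : ℝ) -
      x * ∑ p ∈ (Icc 1 ⌊x⌋₊).filter Nat.Prime, (1 : ℝ) / p| ≤ C * x / Real.log x := by
  refine ⟨2 * Real.log 4 + 2, by positivity, fun x hx => ?_⟩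
  have hlog : 0 < Real.log x := Real.log_pos (by linarith)
  have hpi := Chebyshev.pi_le_log4_mul_div (x := x) (by linarith)
  have hcard : (((Icc 1 ⌊x⌋₊).filter Nat.Prime).card : ℝ) ≤ (2 * Real.log 4 + 2) * x / Real.log x := by
    have e : ((Icc 1 ⌊x⌋₊).filter Nat.Prime).card = Nat.primeCounting ⌊x⌋₊ := by
      rw [← Nat.primesLE_card_eq_primeCounting, Nat.primesLE_eq_filter_range]
      congr 1
      ext p
      simp only [mem_filter, mem_Icc, mem_range]
      constructor
      · rintro ⟨h, h'⟩; exact ⟨by omega, h'⟩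
      · rintro ⟨h, h'⟩; exact ⟨⟨h'.one_le, by omega⟩, h'⟩
    rw [e]
    refine hpi.trans ?_
    rw [Real.log_sqrt (by linarith)]
    have h1 : Real.log (√x) ≤ √x := Real.log_le_self (Real.sqrt_nonneg x)
    rw [Real.log_sqrt (by linarith)] at h1
    have h2 : √x * √x = x := Real.mul_self_sqrt (by linarith)
    have h3 : √x ≤ 2 * x / Real.log x := by
      rw [le_div_iff₀ hlog]
      nlinarith [Real.sqrt_nonneg x]
    calc _ ≤ Real.log 4 * x / (Real.log x / 2) + 2 * x / Real.log x := by linarith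
      _ = _ := by field_simp
  refine le_trans ?_ hcard
  rw [aux_omega, mul_sum, ← sum_sub_distrib]
  refine (abs_sum_le_sum_abs _ _).trans ?_
  rw [card_eq_sum_ones, Nat.cast_sum, Nat.cast_one]
  refine sum_le_sum fun p hp => ?_
  rw [← Nat.floor_div_natCast, mul_one_div]
  have h1 := Nat.floor_le (a := x / p) (by positivity)
  have h2 := Nat.lt_floor_add_one (x / p)
  rw [abs_le]
  constructor <;> linarith

lemma aux_tail : ∃ K : ℝ, 0 ≤ K ∧ ∀ x y : ℝ, 2 ≤ x → x ≤ y →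
    |∑ p ∈ (Icc 1 ⌊y⌋₊).filter Nat.Prime, (1 : ℝ) / p - Real.log (Real.log y) -
      (∑ p ∈ (Icc 1 ⌊x⌋₊).filter Nat.Prime, (1 : ℝ) / p - Real.log (Real.log x))|
      ≤ K / Real.log x := by
  obtain ⟨K, hK0, hK⟩ := aux_M1'
  refine ⟨2 * K, by positivity, fun x y hx hxy => ?_⟩
  set c : ℕ → ℝ := fun n => if n.Prime then Real.log n / (n:ℝ) else 0 with hc
  set g : ℝ → ℝ := fun t => (t * Real.log t ^ 2)⁻¹ with hg
  have hlp : ∀ t ∈ Set.Icc x y, 0 < Real.log t := fun t ht => Real.log_pos (by linarith [ht.1])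
  have htp : ∀ t ∈ Set.Icc x y, 0 < t := fun t ht => by linarith [ht.1]
  have hd : ∀ t ∈ Set.Icc x y, HasDerivAt (fun t => (Real.log t)⁻¹) (-g t) t := by
    intro t ht
    have h := (Real.hasDerivAt_log (htp t ht).ne').inv (hlp t ht).ne'
    convert! h using 1
    have := hlp t ht
    have := htp t ht
    simp only [hg]
    field_simp
  have hgc : ContinuousOn g (Set.Icc x y) := by
    intro t ht
    have := hlp t ht
    have := htp t ht
    apply ContinuousAt.continuousWithinAt
    apply ContinuousAt.inv₀
    · exact continuousAt_id.mul ((Real.continuousAt_log (by positivity)).pow 2)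
    · positivity
  have hlc : ContinuousOn Real.log (Set.Icc x y) := fun t ht =>
    (Real.continuousAt_log (htp t ht).ne').continuousWithinAt
  have hde : Set.EqOn (deriv (fun t => (Real.log t)⁻¹)) (fun t => -g t) (Set.Icc x y) :=
    fun t ht => (hd t ht).deriv
  have habel := sum_mul_eq_sub_sub_integral_mul c (f := fun t => (Real.log t)⁻¹) (a := x) (b := y)
    (by linarith) hxy (fun t ht => (hd t ht).differentiableAt)
    ((MeasureTheory.integrableOn_congr_fun hde measurableSet_Icc).2 hgc.neg.integrableOn_Icc)
  have hsum : ∑ k ∈ Ioc ⌊x⌋₊ ⌊y⌋₊, (Real.log k)⁻¹ * c k =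
      ∑ p ∈ (Icc 1 ⌊y⌋₊).filter Nat.Prime, (1 : ℝ) / p -
        ∑ p ∈ (Icc 1 ⌊x⌋₊).filter Nat.Prime, (1 : ℝ) / p := by
    have h1 : ∀ k ∈ Ioc ⌊x⌋₊ ⌊y⌋₊, (Real.log k)⁻¹ * c k = if k.Prime then (1:ℝ) / k else 0 := by
      intro k _
      simp only [hc]
      split_ifs with h
      · have : 0 < Real.log k := Real.log_pos (by exact_mod_cast h.one_lt)
        field_simp
      · simp
    rw [sum_congr rfl h1, sum_filter, sum_filter, eq_sub_iff_add_eq, add_comm]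
    exact sum_Ioc_consecutive (fun k : ℕ => if k.Prime then (1:ℝ) / k else 0) (Nat.zero_le _)
      (Nat.floor_le_floor hxy)
  have hint : - ∫ t in Set.Ioc x y, deriv (fun t => (Real.log t)⁻¹) t * ∑ k ∈ Icc 0 ⌊t⌋₊, c k =
      ∫ t in x..y, g t * ∑ k ∈ Icc 0 ⌊t⌋₊, c k := by
    rw [intervalIntegral.integral_of_le hxy, ← MeasureTheory.integral_neg]
    refine MeasureTheory.setIntegral_congr_fun measurableSet_Ioc fun t ht => ?_
    simp only [hde (Set.Ioc_subset_Icc_self ht)]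
    ring
  have hii : IntervalIntegrable (fun t => g t * ∑ k ∈ Icc 0 ⌊t⌋₊, c k) MeasureTheory.volume x y := by
    rw [intervalIntegrable_iff_integrableOn_Icc_of_le hxy]
    exact integrableOn_mul_sum_Icc c (by linarith) hgc.integrableOn_Icc
  have hI : ∀ s : ℝ, IntervalIntegrable (fun t => g t * (Real.log t + s)) MeasureTheory.volume x y := by
    intro s
    apply ContinuousOn.intervalIntegrable
    rw [Set.uIcc_of_le hxy]
    exact hgc.mul (hlc.add continuousOn_const)
  have hF : ∀ s : ℝ, ∫ t in x..y, g t * (Real.log t + s) =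
      (Real.log (Real.log y) - s * (Real.log y)⁻¹) -
      (Real.log (Real.log x) - s * (Real.log x)⁻¹) := by
    intro s
    apply intervalIntegral.integral_eq_sub_of_hasDerivAt
      (f := fun t => Real.log (Real.log t) - s * (Real.log t)⁻¹) _ (hI s)
    intro t ht
    rw [Set.uIcc_of_le hxy] at ht
    have h1 := (Real.hasDerivAt_log (htp t ht).ne').log (hlp t ht).ne'
    have h2 := h1.sub ((hd t ht).const_mul s)
    convert! h2 using 1
    have := hlp t ht
    have := htp t ht
    simp only [hg]
    field_simp
    ring
  have hgn : ∀ t ∈ Set.Icc x y, 0 ≤ g t := fun t ht => by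
    have := htp t ht
    simp only [hg]; positivity
  have hup : ∫ t in x..y, g t * ∑ k ∈ Icc 0 ⌊t⌋₊, c k ≤ ∫ t in x..y, g t * (Real.log t + K) := by
    refine intervalIntegral.integral_mono_on hxy hii (hI K) fun t ht => ?_
    have := abs_le.1 (hK t (by linarith [ht.1]))
    exact mul_le_mul_of_nonneg_left (by linarith [this.2]) (hgn t ht)
  have hlo : ∫ t in x..y, g t * (Real.log t + -K) ≤ ∫ t in x..y, g t * ∑ k ∈ Icc 0 ⌊t⌋₊, c k := by
    refine intervalIntegral.integral_mono_on hxy (hI (-K)) hii fun t ht => ?_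
    have := abs_le.1 (hK t (by linarith [ht.1]))
    exact mul_le_mul_of_nonneg_left (by linarith [this.1]) (hgn t ht)
  rw [hF] at hup hlo
  rw [hsum] at habel
  have hAx := abs_le.1 (hK x (by linarith))
  have hAy := abs_le.1 (hK y (by linarith))
  have lx := hlp x ⟨le_refl _, hxy⟩
  have ly := hlp y ⟨hxy, le_refl _⟩
  change _ ≤ (∑ k ∈ Icc 0 ⌊x⌋₊, c k) - _ ∧ (∑ k ∈ Icc 0 ⌊x⌋₊, c k) - _ ≤ _ at hAx
  change _ ≤ (∑ k ∈ Icc 0 ⌊y⌋₊, c k) - _ ∧ (∑ k ∈ Icc 0 ⌊y⌋₊, c k) - _ ≤ _ at hAy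
  generalize (∑ k ∈ Icc 0 ⌊x⌋₊, c k) = Ax at *
  generalize (∑ k ∈ Icc 0 ⌊y⌋₊, c k) = Ay at *
  have ix : 0 < (Real.log x)⁻¹ := by positivity
  have iy : 0 < (Real.log y)⁻¹ := by positivity
  have ex : (Real.log x)⁻¹ * Real.log x = 1 := inv_mul_cancel₀ lx.ne'
  have ey : (Real.log y)⁻¹ * Real.log y = 1 := inv_mul_cancel₀ ly.ne'
  have a1 := mul_le_mul_of_nonneg_left hAx.1 ix.le
  have a2 := mul_le_mul_of_nonneg_left hAx.2 ix.le
  have a3 := mul_le_mul_of_nonneg_left hAy.1 iy.le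
  have a4 := mul_le_mul_of_nonneg_left hAy.2 iy.le
  rw [div_eq_mul_inv, abs_le]
  constructor <;> nlinarith

theorem average_order_of_omega :
    ∃ B₁ : ℝ,
      Filter.Tendsto
        (fun x : ℝ =>
          (∑ p ∈ (Finset.Icc 1 ⌊x⌋₊).filter Nat.Prime, (1 : ℝ) / p) -
            Real.log (Real.log x))
        Filter.atTop (nhds B₁) ∧
      ∃ C : ℝ, 0 < C ∧ ∀ x : ℝ, 3 ≤ x →
        |(∑ n ∈ Finset.Icc 1 ⌊x⌋₊, (n.primeFactors.card : ℝ)) -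
            (x * Real.log (Real.log x) + B₁ * x)| ≤ C * x / Real.log x := by
  obtain ⟨K, hK0, hK⟩ := aux_tail
  obtain ⟨C, hC0, hC⟩ := aux_omega_bd
  set F : ℝ → ℝ := fun x => (∑ p ∈ (Finset.Icc 1 ⌊x⌋₊).filter Nat.Prime, (1 : ℝ) / p) -
            Real.log (Real.log x) with hF
  have hK' : ∀ x y : ℝ, 2 ≤ x → x ≤ y → |F y - F x| ≤ K / Real.log x := hK
  have hKlim : Filter.Tendsto (fun x => K / Real.log x) Filter.atTop (nhds 0) :=
    Real.tendsto_log_atTop.const_div_atTop K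
  have hcau : Cauchy (Filter.map F Filter.atTop) := by
    rw [Metric.cauchy_iff]
    refine ⟨inferInstance, fun ε hε => ?_⟩
    obtain ⟨N, hN2, hN⟩ := ((Filter.eventually_ge_atTop (2:ℝ)).and
      (hKlim.eventually (gt_mem_nhds (half_pos hε)))).exists
    refine ⟨F '' Set.Ici N, Filter.image_mem_map (Filter.Ici_mem_atTop N), ?_⟩
    rintro _ ⟨a, ha, rfl⟩ _ ⟨b, hb, rfl⟩
    have h1 := abs_le.1 (hK' N a hN2 ha)
    have h2 := abs_le.1 (hK' N b hN2 hb)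
    rw [Real.dist_eq, abs_lt]
    constructor <;> linarith [h1.1, h1.2, h2.1, h2.2]
  obtain ⟨B, hB⟩ := CompleteSpace.complete hcau
  have hB' : Filter.Tendsto F Filter.atTop (nhds B) := hB
  refine ⟨B, hB', C + K, by positivity, fun x hx => ?_⟩
  have hlim : |B - F x| ≤ K / Real.log x := by
    refine le_of_tendsto (hB'.sub_const (F x)).abs ?_
    filter_upwards [Filter.eventually_ge_atTop x] with y hy
    exact hK' x y (by linarith) hy
  have h1 := abs_le.1 (hC x hx)
  have h2 := abs_le.1 hlim
  have hx0 : 0 ≤ x := by linarith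
  have h3 := mul_le_mul_of_nonneg_left h2.1 hx0
  have h4 := mul_le_mul_of_nonneg_left h2.2 hx0
  have e : (C + K) * x / Real.log x = C * x / Real.log x + x * (K / Real.log x) := by ring
  simp only [hF] at h3 h4
  rw [e, abs_le]
  constructor <;> linarith [h1.1, h1.2]
end
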